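/- For all natural numbers n and parameters x, t (with t ≠ q^{-i} for 0 ≤ i ≤ n, q not a root of unity), ∑_{i=0}^n [n choose i]_q (-1)^{i-1} (x+1)(x+q)⋯(x+q^{i-1}) q^i/(1-t q^i) = -((q;q)_n / (t;q)_{n+1}) ∑_{i=0}^n ((t;q)_i / (q;q)_i) (-xq)^i. -/

import Mathlib

/-!
Both sides satisfy the same first-order recurrence in `n`. Write `S n` for the negated left-hand
side and `P i = (x+1)(x+q)⋯(x+q^{i-1})`. The right-hand side visibly gives
`(1 - t q^{n+1}) S (n+1) = (1 - q^{n+1}) S n + (-xq)^{n+1}`. For the left-hand side,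
`(1 - q^{n+1}) [n, i] = (1 - q^{n+1-i}) [n+1, i]` and
`(1 - t q^{n+1}) - (1 - q^{n+1-i}) = q^{n+1-i} (1 - t q^i)`, so the denominators cancel and the
recurrence becomes `∑ [N, i] (-1)^i P i = (-x)^N` for `N = n + 1` (`sum_qBinom_alternating`).
That identity follows by induction from the `q`-Pascal rule, because
`q^i P i - P (i+1) = -x P i`.
-/

open Finset

/-- The q-Pochhammer symbol `(a;q)_n = (1-a)(1-aq)⋯(1-aq^{n-1})`. -/
noncomputable def qPoch {K : Type*} [Field K] (q a : K) (n : ℕ) : K :=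
  ∏ k ∈ Finset.range n, (1 - a * q ^ k)

/-- The Gaussian binomial coefficient `[n choose i]_q = (q;q)_n / ((q;q)_i (q;q)_{n-i})`. -/
noncomputable def qBinom {K : Type*} [Field K] (q : K) (n i : ℕ) : K :=
  qPoch q q n / (qPoch q q i * qPoch q q (n - i))

/-- `wsum f m lo n = ∑_{lo ≤ i₁ ≤ i₂ ≤ ⋯ ≤ i_m ≤ n} f i₁ ⋯ f i_m`
(sum over weakly increasing `m`-tuples; the empty sum for `m = 0` is `1`). -/
noncomputable def wsum {K : Type*} [Field K] (f : ℕ → K) : ℕ → ℕ → ℕ → K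
  | 0, _, _ => 1
  | m + 1, lo, n => ∑ j ∈ Finset.Icc lo n, f j * wsum f m j n

section

variable {K : Type*} [Field K]

theorem qPoch_succ (q a : K) (n : ℕ) : qPoch q a (n + 1) = qPoch q a n * (1 - a * q ^ n) :=
  prod_range_succ _ _

theorem one_sub_mul_pow_ne_zero {q : K} (hq : ∀ k : ℕ, 0 < k → q ^ k ≠ 1) (k : ℕ) :
    1 - q * q ^ k ≠ 0 := by
  rw [← pow_succ']
  exact sub_ne_zero.mpr (hq (k + 1) k.succ_pos).symm

theorem qPoch_self_ne_zero {q : K} (hq : ∀ k : ℕ, 0 < k → q ^ k ≠ 1) (n : ℕ) :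
    qPoch q q n ≠ 0 :=
  prod_ne_zero_iff.mpr fun k _ => one_sub_mul_pow_ne_zero hq k

theorem qBinom_zero_right {q : K} (hq : ∀ k : ℕ, 0 < k → q ^ k ≠ 1) (n : ℕ) :
    qBinom q n 0 = 1 := by
  have := qPoch_self_ne_zero hq n
  simpa [qBinom, qPoch] using this

theorem qBinom_self {q : K} (hq : ∀ k : ℕ, 0 < k → q ^ k ≠ 1) (n : ℕ) :
    qBinom q n n = 1 := by
  have := qPoch_self_ne_zero hq n
  simpa [qBinom, qPoch] using this

/-- The `q`-Pascal rule. The bound `i < n` keeps both coefficients on the right away from the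
truncated subtraction in `qBinom`. -/
theorem qBinom_succ_succ {q : K} (hq : ∀ k : ℕ, 0 < k → q ^ k ≠ 1) {n i : ℕ} (h : i < n) :
    qBinom q (n + 1) (i + 1) = qBinom q n i + q ^ (i + 1) * qBinom q n (i + 1) := by
  obtain ⟨m, rfl⟩ := Nat.exists_eq_add_of_lt h
  have e1 : i + m + 1 + 1 - (i + 1) = m + 1 := by omega
  have e2 : i + m + 1 - i = m + 1 := by omega
  have e3 : i + m + 1 - (i + 1) = m := by omega
  simp only [qBinom, e1, e2, e3, qPoch_succ q q (i + m + 1), qPoch_succ q q i, qPoch_succ q q m]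
  have h1 := qPoch_self_ne_zero hq i
  have h2 := qPoch_self_ne_zero hq m
  have h3 := one_sub_mul_pow_ne_zero hq i
  have h4 := one_sub_mul_pow_ne_zero hq m
  field_simp
  ring

/-- Absorption rule: passing from `[n, i]` to `[n+1, i]`. -/
theorem one_sub_mul_qBinom {q : K} (hq : ∀ k : ℕ, 0 < k → q ^ k ≠ 1) {n i : ℕ} (h : i ≤ n) :
    (1 - q ^ (n + 1)) * qBinom q n i = (1 - q ^ (n + 1 - i)) * qBinom q (n + 1) i := by
  obtain ⟨m, rfl⟩ := Nat.exists_eq_add_of_le h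
  have e1 : i + m + 1 - i = m + 1 := by omega
  have e2 : i + m - i = m := by omega
  simp only [qBinom, e1, e2, qPoch_succ q q (i + m), qPoch_succ q q m]
  have h1 := qPoch_self_ne_zero hq i
  have h2 := qPoch_self_ne_zero hq m
  have h4 := one_sub_mul_pow_ne_zero hq m
  field_simp
  ring

/-- The `q`-Pascal rule summed against an arbitrary sequence. -/
theorem sum_qBinom_succ {q : K} (hq : ∀ k : ℕ, 0 < k → q ^ k ≠ 1) (n : ℕ) (a : ℕ → K) :
    ∑ i ∈ range (n + 2), qBinom q (n + 1) i * a i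
      = ∑ i ∈ range (n + 1), qBinom q n i * (q ^ i * a i + a (i + 1)) := by
  have hmid : ∑ i ∈ range n, qBinom q (n + 1) (i + 1) * a (i + 1)
      = ∑ i ∈ range n, qBinom q n (i + 1) * (q ^ (i + 1) * a (i + 1))
        + ∑ i ∈ range n, qBinom q n i * a (i + 1) := by
    rw [← sum_add_distrib]
    refine sum_congr rfl fun i hi => ?_
    rw [qBinom_succ_succ hq (mem_range.mp hi)]
    ring
  simp only [mul_add, sum_add_distrib]
  rw [sum_range_succ, sum_range_succ', hmid, sum_range_succ' _ n,
    sum_range_succ (fun i => qBinom q n i * a (i + 1))]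
  simp only [qBinom_zero_right hq, qBinom_self hq]
  ring

theorem sum_qBinom_alternating {q : K} (hq : ∀ k : ℕ, 0 < k → q ^ k ≠ 1) (x : K) (n : ℕ) :
    ∑ i ∈ range (n + 1), qBinom q n i * ((-1) ^ i * ∏ j ∈ range i, (x + q ^ j)) = (-x) ^ n := by
  induction n with
  | zero => simp [qBinom, qPoch]
  | succ n ih =>
    rw [sum_qBinom_succ hq n fun i => (-1) ^ i * ∏ j ∈ range i, (x + q ^ j), pow_succ, ← ih,
      sum_mul]
    refine sum_congr rfl fun i _ => ?_
    rw [prod_range_succ]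
    ring

/-- The recurrence in `n` for the left-hand sum. -/
theorem lhs_recurrence {q : K} (hq : ∀ k : ℕ, 0 < k → q ^ k ≠ 1) (x t : K) (n : ℕ)
    (ht : ∀ i : ℕ, i ≤ n + 1 → t * q ^ i ≠ 1) :
    (1 - t * q ^ (n + 1)) * ∑ i ∈ range (n + 1 + 1), qBinom q (n + 1) i * (-((-1 : K) ^ i)) *
        (∏ j ∈ range i, (x + q ^ j)) * q ^ i / (1 - t * q ^ i)
      = (1 - q ^ (n + 1)) * (∑ i ∈ range (n + 1), qBinom q n i * (-((-1 : K) ^ i)) *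
        (∏ j ∈ range i, (x + q ^ j)) * q ^ i / (1 - t * q ^ i)) - (-(x * q)) ^ (n + 1) := by
  have hpow : (-(x * q)) ^ (n + 1) = q ^ (n + 1) * (-x) ^ (n + 1) := by
    rw [← mul_pow]; ring
  rw [hpow, ← sum_qBinom_alternating hq x (n + 1),
    sum_range_succ (M := K) _ (n + 1), sum_range_succ (M := K) _ (n + 1),
    mul_add, mul_add, ← sub_sub, sub_eq_add_neg (_ - _) _]
  congr 1
  · rw [mul_sum, mul_sum, mul_sum, ← sum_sub_distrib]
    refine sum_congr rfl fun i hi => ?_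
    have hi' : i ≤ n := Nat.lt_succ_iff.mp (mem_range.mp hi)
    have hd : 1 - t * q ^ i ≠ 0 := sub_ne_zero.mpr (ht i (by omega)).symm
    have hs : q ^ (n + 1) = q ^ (n + 1 - i) * q ^ i := by
      rw [← pow_add]; congr 1; omega
    have habs := one_sub_mul_qBinom hq hi'
    set P := ∏ j ∈ range i, (x + q ^ j)
    have hr : (1 - q ^ (n + 1)) *
          (qBinom q n i * (-((-1 : K) ^ i)) * P * q ^ i / (1 - t * q ^ i))
        = (1 - q ^ (n + 1 - i)) * qBinom q (n + 1) i * (-((-1 : K) ^ i)) * P * q ^ i /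
          (1 - t * q ^ i) := by
      rw [← habs]; ring
    rw [hr, hs]
    field_simp
    ring
  · have hd : 1 - t * q ^ (n + 1) ≠ 0 := sub_ne_zero.mpr (ht _ le_rfl).symm
    field_simp

end

/-- Second Fu–Lascoux identity.  Here `(-((-1)^i))` stands for `(-1)^{i-1}`. -/
theorem fu_lascoux_two {K : Type*} [Field K] (q x t : K)
    (hq : ∀ k : ℕ, 0 < k → q ^ k ≠ 1) (n : ℕ)
    (ht : ∀ i : ℕ, i ≤ n → t * q ^ i ≠ 1) :
    ∑ i ∈ range (n + 1), qBinom q n i * (-((-1 : K) ^ i)) *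
        (∏ j ∈ range i, (x + q ^ j)) * q ^ i / (1 - t * q ^ i)
      = -(qPoch q q n / qPoch q t (n + 1)) *
          ∑ i ∈ range (n + 1), qPoch q t i / qPoch q q i * (-(x * q)) ^ i := by
  induction n with
  | zero => simp [qBinom, qPoch, neg_div]
  | succ n ih =>
    have hd : 1 - t * q ^ (n + 1) ≠ 0 := sub_ne_zero.mpr (ht _ le_rfl).symm
    have hqn := qPoch_self_ne_zero hq n
    have hq1 := one_sub_mul_pow_ne_zero hq n
    have htn : qPoch q t (n + 1) ≠ 0 := prod_ne_zero_iff.mpr fun k hk =>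
      sub_ne_zero.mpr (ht k (mem_range.mp hk).le).symm
    apply mul_left_cancel₀ hd
    rw [lhs_recurrence hq x t n ht, ih fun i hi => ht i (by omega), sum_range_succ _ (n + 1),
      qPoch_succ q q n, qPoch_succ q t (n + 1)]
    generalize ∑ i ∈ range (n + 1), qPoch q t i / qPoch q q i * (-(x * q)) ^ i = R
    generalize (-(x * q)) ^ (n + 1) = y
    generalize 1 - t * q ^ (n + 1) = d at hd ⊢
    rw [pow_succ' q n]
    generalize 1 - q * q ^ n = c at hq1 ⊢
    field_simp
    ring
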